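/- arXiv:0808.2476 — 2 statements merged into one kernel-verified Lean document; each statement's English description precedes it below -/
import Mathlib

section
/- Let n ≥ 1, let R ≥ 1 be a real number, and let C_R^n = {x ∈ ℝ^n : max_{1≤i≤n} |x_i| ≤ R} be the cube of side-length 2R centered at the origin. Let Λ be a lattice of full rank in ℝ^n of determinant Δ such that there exist a positive constant c and an upper-triangular basis matrix A = (a_{ij}) of Λ whose diagonal entries satisfy a_{ii} ≥ c for all 1 ≤ i ≤ n. Assume 2R ≥ max{Δ/c^{n−1}, c}. Then for every point z ∈ ℝ^n, (2Rc^{n−1}/Δ − 1)(2R/c − 1)^{n−1} ≤ |Λ ∩ (C_R^n + z)| ≤ (2Rc^{n−1}/Δ + 1)(2R/c + 1)^{n−1}. -/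
theorem count_one (a w R : ℝ) (ha : 0 < a) (haR : a ≤ 2 * R) :
    Finite {k : ℤ // |a * k + w| ≤ R} ∧
    2 * R / a - 1 ≤ (Nat.card {k : ℤ // |a * k + w| ≤ R} : ℝ) ∧
    (Nat.card {k : ℤ // |a * k + w| ≤ R} : ℝ) ≤ 2 * R / a + 1 := by
  have hmem : ∀ k : ℤ, k ∈ Finset.Icc ⌈(-w - R) / a⌉ ⌊(-w + R) / a⌋ ↔ |a * k + w| ≤ R := by
    intro k
    rw [Finset.mem_Icc, Int.ceil_le, Int.le_floor, div_le_iff₀ ha, le_div_iff₀ ha, abs_le]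
    constructor
    · rintro ⟨h1, h2⟩
      constructor <;> linarith
    · rintro ⟨h1, h2⟩
      constructor <;> linarith
  have hcard : Nat.card {k : ℤ // |a * k + w| ≤ R} =
      (Finset.Icc ⌈(-w - R) / a⌉ ⌊(-w + R) / a⌋).card := by
    exact Nat.subtype_card _ hmem
  have h1 := Int.floor_le ((-w + R) / a)
  have h2 := Int.lt_floor_add_one ((-w + R) / a)
  have h3 := Int.le_ceil ((-w - R) / a)
  have h4 := Int.ceil_lt_add_one ((-w - R) / a)
  have h5 : (-w + R) / a - (-w - R) / a = 2 * R / a := by field_simp; ring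
  have h6 : 0 < 2 * R / a := div_pos (by linarith) ha
  refine ⟨?_, ?_, ?_⟩
  · exact Finite.of_equiv _ (Equiv.subtypeEquivRight hmem)
  all_goals
    rw [hcard, Int.card_Icc]
  · have : ((⌊(-w + R) / a⌋ + 1 - ⌈(-w - R) / a⌉ : ℤ) : ℝ) ≤
        (((⌊(-w + R) / a⌋ + 1 - ⌈(-w - R) / a⌉).toNat : ℤ) : ℝ) := by
      exact_mod_cast Int.self_le_toNat _
    push_cast at this ⊢
    linarith
  · have : (((⌊(-w + R) / a⌋ + 1 - ⌈(-w - R) / a⌉).toNat : ℤ) : ℝ) =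
        ((max (⌊(-w + R) / a⌋ + 1 - ⌈(-w - R) / a⌉) 0 : ℤ) : ℝ) := by
      rw [Int.toNat_eq_max]
    push_cast at this
    rw [this]
    apply max_le <;> linarith

theorem count_all (R : ℝ) : ∀ (n : ℕ) (A : Matrix (Fin n) (Fin n) ℝ)
    (_ : Matrix.BlockTriangular A id) (_ : ∀ i, 0 < A i i) (_ : ∀ i, A i i ≤ 2 * R)
    (z : Fin n → ℝ),
    Finite {m : Fin n → ℤ // ∀ i, |A.mulVec (fun i => (m i : ℝ)) i - z i| ≤ R} ∧
    ∏ i, (2 * R / A i i - 1) ≤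
      (Nat.card {m : Fin n → ℤ // ∀ i, |A.mulVec (fun i => (m i : ℝ)) i - z i| ≤ R} : ℝ) ∧
    (Nat.card {m : Fin n → ℤ // ∀ i, |A.mulVec (fun i => (m i : ℝ)) i - z i| ≤ R} : ℝ) ≤
      ∏ i, (2 * R / A i i + 1) := by
  intro n
  induction n with
  | zero =>
    intro A _ _ _ z
    refine ⟨inferInstance, ?_⟩
    have : Nat.card {m : Fin 0 → ℤ // ∀ i, |A.mulVec (fun i => (m i : ℝ)) i - z i| ≤ R} = 1 := by
      rw [Nat.card_eq_one_iff_unique]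
      exact ⟨inferInstance, ⟨⟨Fin.elim0, fun i => i.elim0⟩⟩⟩
    simp [this]
  | succ n ih =>
    intro A hA hpos hle z
    obtain ⟨hfin, hlo, hhi⟩ := ih (A.submatrix Fin.succ Fin.succ)
      (fun i j hij => hA (by simpa using hij)) (fun i => hpos _) (fun i => hle _)
      (fun i => z i.succ)
    set S := {m : Fin n → ℤ // ∀ i, |(A.submatrix Fin.succ Fin.succ).mulVec
      (fun i => (m i : ℝ)) i - z i.succ| ≤ R} with hS
    let w : S → ℝ := fun m => ∑ j : Fin n, A 0 j.succ * (m.1 j : ℝ) - z 0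
    have key : ∀ (k : ℤ) (m : Fin n → ℤ),
        (∀ i, |A.mulVec (fun i => ((Fin.cons k m : Fin (n+1) → ℤ) i : ℝ)) i - z i| ≤ R) ↔
        |A 0 0 * k + (∑ j : Fin n, A 0 j.succ * (m j : ℝ) - z 0)| ≤ R ∧
        ∀ i, |(A.submatrix Fin.succ Fin.succ).mulVec
          (fun i => (m i : ℝ)) i - z i.succ| ≤ R := by
      intro k m
      rw [Fin.forall_fin_succ]
      have h0 : ∀ i : Fin n, A i.succ 0 = 0 := fun i => hA (Fin.succ_pos i)
      simp [Matrix.mulVec, dotProduct, Fin.sum_univ_succ, h0, add_sub_assoc]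
    let e : {m : Fin (n+1) → ℤ // ∀ i, |A.mulVec (fun i => (m i : ℝ)) i - z i| ≤ R} ≃
        Σ m : S, {k : ℤ // |A 0 0 * k + w m| ≤ R} :=
      { toFun := fun m =>
          have h := (key (m.1 0) (Fin.tail m.1)).1 (by rw [Fin.cons_self_tail]; exact m.2)
          ⟨⟨Fin.tail m.1, h.2⟩, ⟨m.1 0, h.1⟩⟩
        invFun := fun p => ⟨Fin.cons p.2.1 p.1.1, (key _ _).2 ⟨p.2.2, p.1.2⟩⟩
        left_inv := fun m => Subtype.ext (Fin.cons_self_tail m.1)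
        right_inv := fun p => rfl }
    have hone := fun m : S => count_one (A 0 0) (w m) R (hpos 0) (hle 0)
    haveI : ∀ m : S, Finite {k : ℤ // |A 0 0 * k + w m| ≤ R} := fun m => (hone m).1
    haveI := Fintype.ofFinite S
    refine ⟨Finite.of_equiv _ e.symm, ?_, ?_⟩
    all_goals
      rw [Nat.card_congr e, Nat.card_sigma, Fin.prod_univ_succ]
      push_cast
    · have h1 : 0 ≤ 2 * R / A 0 0 - 1 := by
        rw [sub_nonneg, one_le_div (hpos 0)]; exact hle 0
      calc _ ≤ (2 * R / A 0 0 - 1) * (Nat.card S : ℝ) := mul_le_mul_of_nonneg_left hlo h1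
        _ = ∑ m : S, (2 * R / A 0 0 - 1) := by
          rw [Finset.sum_const, Finset.card_univ, Nat.card_eq_fintype_card, nsmul_eq_mul, mul_comm]
        _ ≤ _ := Finset.sum_le_sum fun m _ => (hone m).2.1
    · have h1 : 0 ≤ 2 * R / A 0 0 + 1 := by
        have := div_pos ((hpos 0).trans_le (hle 0)) (hpos 0)
        linarith
      calc _ ≤ ∑ m : S, (2 * R / A 0 0 + 1) := Finset.sum_le_sum fun m _ => (hone m).2.2
        _ = (2 * R / A 0 0 + 1) * (Nat.card S : ℝ) := by
          rw [Finset.sum_const, Finset.card_univ, Nat.card_eq_fintype_card, nsmul_eq_mul, mul_comm]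
        _ ≤ _ := mul_le_mul_of_nonneg_left hhi h1

theorem prod_bounds (u : ℝ) (hu : 1 ≤ u) : ∀ (k : ℕ) (y : Fin (k+1) → ℝ)
    (_ : ∀ i, 1 ≤ u * y i) (_ : ∀ i, y i ≤ 1),
    (u * ∏ i, y i - 1) * (u - 1) ^ k ≤ ∏ i, (u * y i - 1) ∧
    ∏ i, (u * y i + 1) ≤ (u * ∏ i, y i + 1) * (u + 1) ^ k := by
  intro k
  induction k with
  | zero => intro y _ _; simp
  | succ k ih =>
    intro y h1 h2
    obtain ⟨hl, hh⟩ := ih (fun i => y i.succ) (fun i => h1 _) (fun i => h2 _)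
    have hpos : ∀ i, 0 ≤ y i := fun i => by
      by_contra h
      have := h1 i
      nlinarith
    have hY1 : ∏ i : Fin (k+1), y i.succ ≤ 1 :=
      Finset.prod_le_one (fun i _ => hpos _) (fun i _ => h2 _)
    rw [Fin.prod_univ_succ, Fin.prod_univ_succ (fun i => u * y i - 1),
      Fin.prod_univ_succ (fun i => u * y i + 1)]
    set Y := ∏ i : Fin (k+1), y i.succ
    have hm : 0 ≤ u * ((1 - y 0) * (1 - Y)) :=
      mul_nonneg (by linarith) (mul_nonneg (by linarith [h2 0]) (by linarith))
    constructor
    · calc _ = ((u * (y 0 * Y) - 1) * (u - 1)) * (u - 1) ^ k := by ring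
        _ ≤ ((u * y 0 - 1) * (u * Y - 1)) * (u - 1) ^ k :=
          mul_le_mul_of_nonneg_right (by linarith) (pow_nonneg (by linarith) _)
        _ = (u * y 0 - 1) * ((u * Y - 1) * (u - 1) ^ k) := by ring
        _ ≤ _ := mul_le_mul_of_nonneg_left hl (by linarith [h1 0])
    · calc _ ≤ (u * y 0 + 1) * ((u * Y + 1) * (u + 1) ^ k) :=
          mul_le_mul_of_nonneg_left hh (by linarith [h1 0])
        _ = ((u * y 0 + 1) * (u * Y + 1)) * (u + 1) ^ k := by ring
        _ ≤ ((u * (y 0 * Y) + 1) * (u + 1)) * (u + 1) ^ k :=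
          mul_le_mul_of_nonneg_right (by linarith) (pow_nonneg (by linarith) _)
        _ = _ := by ring

/-- **Counting lattice points in a translated cube** (Lemma 5.1 of the paper).
Let `Λ ⊆ ℝ^n` be the full-rank lattice spanned over `ℤ` by the columns of an upper-triangular
matrix `A` whose diagonal entries are all at least `c > 0`, and let `Δ = |det A|` be its
determinant. If `R ≥ 1` and `2R ≥ max{Δ/c^{n-1}, c}`, then for every `z ∈ ℝ^n` the number of
points of `Λ` in the cube of side length `2R` centered at `z` is between
`(2Rc^{n-1}/Δ - 1)(2R/c - 1)^{n-1}` and `(2Rc^{n-1}/Δ + 1)(2R/c + 1)^{n-1}`. -/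
theorem lattice_points_in_cube {n : ℕ} (hn : 1 ≤ n) (R c : ℝ) (hR : 1 ≤ R) (hc : 0 < c)
    (A : Matrix (Fin n) (Fin n) ℝ)
    (hupper : Matrix.BlockTriangular A id)
    (hdiag : ∀ i, c ≤ A i i)
    (h2R : max (|A.det| / c ^ (n - 1)) c ≤ 2 * R)
    (z : Fin n → ℝ) :
    (2 * R * c ^ (n - 1) / |A.det| - 1) * (2 * R / c - 1) ^ (n - 1) ≤
      (Nat.card {x : Fin n → ℝ //
        (∃ m : Fin n → ℤ, A.mulVec (fun i => (m i : ℝ)) = x) ∧ ∀ i, |x i - z i| ≤ R} : ℝ) ∧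
    (Nat.card {x : Fin n → ℝ //
        (∃ m : Fin n → ℤ, A.mulVec (fun i => (m i : ℝ)) = x) ∧ ∀ i, |x i - z i| ≤ R} : ℝ) ≤
      (2 * R * c ^ (n - 1) / |A.det| + 1) * (2 * R / c + 1) ^ (n - 1) := by
  obtain ⟨k, rfl⟩ : ∃ k, n = k + 1 := ⟨n - 1, by omega⟩
  have hpos : ∀ i, 0 < A i i := fun i => hc.trans_le (hdiag i)
  have hdet : A.det = ∏ i, A i i := Matrix.det_of_upperTriangular hupper
  have hdpos : 0 < A.det := by rw [hdet]; exact Finset.prod_pos fun i _ => hpos i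
  rw [abs_of_pos hdpos] at *
  simp only [Nat.add_sub_cancel] at *
  obtain ⟨hd, hcR⟩ := max_le_iff.1 h2R
  have hle : ∀ i, A i i ≤ 2 * R := by
    intro i
    refine le_trans ?_ hd
    rw [le_div_iff₀ (pow_pos hc k), hdet, ← Finset.mul_prod_erase _ _ (Finset.mem_univ i)]
    refine mul_le_mul_of_nonneg_left ?_ (hpos i).le
    have : c ^ k = ∏ j ∈ Finset.univ.erase i, c := by simp
    rw [this]
    exact Finset.prod_le_prod (fun _ _ => hc.le) (fun j _ => hdiag j)
  have hinj : Function.Injective (fun m : Fin (k+1) → ℤ => A.mulVec (fun i => (m i : ℝ))) := by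
    intro m m' h
    have := Matrix.mulVec_injective_of_isUnit
      ((Matrix.isUnit_iff_isUnit_det A).2 hdpos.ne'.isUnit) h
    funext i
    exact_mod_cast congrFun this i
  have hcard : Nat.card {x : Fin (k+1) → ℝ //
        (∃ m : Fin (k+1) → ℤ, A.mulVec (fun i => (m i : ℝ)) = x) ∧ ∀ i, |x i - z i| ≤ R} =
      Nat.card {m : Fin (k+1) → ℤ // ∀ i, |A.mulVec (fun i => (m i : ℝ)) i - z i| ≤ R} := by
    symm
    refine Nat.card_congr (Equiv.ofBijective (fun m => ⟨_, ⟨m.1, rfl⟩, m.2⟩) ⟨?_, ?_⟩)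
    · intro m m' h
      exact Subtype.ext (hinj (congrArg Subtype.val h))
    · rintro ⟨x, ⟨m, rfl⟩, hx⟩
      exact ⟨⟨m, hx⟩, rfl⟩
  obtain ⟨-, hlo, hhi⟩ := count_all R (k+1) A hupper hpos hle z
  have hy : ∀ i, 2 * R / c * (c / A i i) = 2 * R / A i i := fun i => by
    have := (hpos i).ne'
    field_simp
  have hY : 2 * R / c * ∏ i, (c / A i i) = 2 * R * c ^ k / A.det := by
    rw [Finset.prod_div_distrib, ← hdet]
    simp only [Finset.prod_const, Finset.card_univ, Fintype.card_fin]
    field_simp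
    ring
  obtain ⟨pl, ph⟩ := prod_bounds (2 * R / c) ((one_le_div hc).2 hcR) k (fun i => c / A i i)
    (fun i => by rw [hy, one_le_div (hpos i)]; exact hle i)
    (fun i => (div_le_one (hpos i)).2 (hdiag i))
  rw [hY] at pl ph
  simp only [hy] at pl ph
  rw [hcard]
  exact ⟨pl.trans hlo, hhi.trans ph⟩
end

section
/- Let 1 ≤ l ≤ n−1 and suppose Λ ⊆ ℤ^n is a lattice (subgroup) of rank n−l. Let Δ be the maximum of the absolute values of the Grassmann coordinates of Λ, i.e., of the (n−l)×(n−l) minors of a basis matrix of Λ. Then for every R that is a positive integer multiple of (n−l)Δ, one has (2R)^{n−l}/((n−l)^{n−l} Δ) ≤ |Λ ∩ C_R^n| ≤ (2R/Δ + 1)(2R + 1)^{n−l−1}, where C_R^n = {x ∈ ℝ^n : max_{1≤i≤n} |x_i| ≤ R}. Moreover, the upper bound |Λ ∩ C_R^n| ≤ (2R/Δ + 1)(2R + 1)^{n−l−1} holds for every real R ≥ 1, not necessarily an integer multiple of (n−l)Δ. -/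
theorem slp_index_range {r : ℕ} (A : Matrix (Fin r) (Fin r) ℤ) (hA : A.det ≠ 0) :
    (A.mulVecLin.toAddMonoidHom.range).index = A.det.natAbs := by
  have hinj : Function.Injective A.mulVecLin := by
    rw [← LinearMap.ker_eq_bot, LinearMap.ker_eq_bot']
    intro m hm
    exact Matrix.eq_zero_of_mulVec_eq_zero hA hm
  let e := LinearEquiv.ofInjective A.mulVecLin hinj
  have h1 := Submodule.natAbs_det_equiv (LinearMap.range A.mulVecLin) e
  have h2 : ((LinearMap.range A.mulVecLin).subtype ∘ₗ
      AddMonoidHom.toIntLinearMap (e : (Fin r → ℤ) →+ LinearMap.range A.mulVecLin))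
      = A.mulVecLin := by
    ext x; rfl
  rw [h2] at h1
  have h3 : LinearMap.det A.mulVecLin = A.det := by
    rw [← Matrix.toLin'_apply', LinearMap.det_toLin']
  rw [h3] at h1
  rw [h1]
  rfl

theorem slp_exists_minor {n r : ℕ} (B : Matrix (Fin n) (Fin r) ℤ)
    (hB : LinearIndependent ℤ (fun j => (fun i => B i j))) :
    ∃ f : Fin r → Fin n, (B.submatrix f id).det ≠ 0 := by
  let C : Matrix (Fin n) (Fin r) ℚ := B.map (Int.castRingHom ℚ)
  let φ : (Fin n → ℤ) →ₗ[ℤ] (Fin n → ℚ) :=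
    { toFun := fun v i => (v i : ℚ)
      map_add' := by intro x y; ext i; simp
      map_smul' := by intro x y; ext i; simp }
  have hφ : LinearMap.ker φ = ⊥ := by
    rw [LinearMap.ker_eq_bot']
    intro m hm
    ext i
    have := congrFun hm i
    simpa [φ] using this
  have hC : LinearIndependent ℚ C.col := by
    rw [← LinearIndependent.iff_fractionRing ℤ ℚ]
    exact hB.map' φ hφ
  have hrank : C.rank = r := by
    simpa using hC.rank_matrix
  rw [Matrix.rank_eq_finrank_span_row] at hrank
  obtain ⟨κ, a, ha, hsp, hli⟩ := exists_linearIndependent' ℚ C.row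
  have : Finite κ := Finite.of_injective a ha
  have : Fintype κ := Fintype.ofFinite κ
  rw [← hsp, finrank_span_eq_card hli] at hrank
  let e : Fin r ≃ κ := (Fintype.equivFinOfCardEq hrank).symm
  refine ⟨a ∘ e, fun h0 => ?_⟩
  have hli2 : LinearIndependent ℚ (C.submatrix (a ∘ e) id).row := hli.comp e e.injective
  rw [Matrix.linearIndependent_rows_iff_isUnit, Matrix.isUnit_iff_isUnit_det] at hli2
  have : (C.submatrix (a ∘ e) id).det = ((B.submatrix (a ∘ e) id).det : ℚ) := by
    have := (Int.castRingHom ℚ).map_det (B.submatrix (a ∘ e) id)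
    exact this.symm
  rw [this, h0] at hli2
  simp at hli2

theorem slp_minor_le {n r : ℕ} (B : Matrix (Fin n) (Fin r) ℤ) (Δ : ℤ) (hΔ0 : 0 ≤ Δ)
    (hΔ : ∀ (s : Finset (Fin n)) (hs : s.card = r),
      |(B.submatrix (fun i => s.orderEmbOfFin hs i) id).det| ≤ Δ) (f : Fin r → Fin n) :
    |(B.submatrix f id).det| ≤ Δ := by
  by_cases hf : Function.Injective f
  · let s := Finset.univ.image f
    have hs : s.card = r := by
      rw [Finset.card_image_of_injective _ hf]; simp
    let g : Fin r → Fin r := fun i => (s.orderIsoOfFin hs).symm ⟨f i, by simp [s]⟩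
    have hg : ∀ i, s.orderEmbOfFin hs (g i) = f i := by
      intro i
      rw [← Finset.coe_orderIsoOfFin_apply]
      simp [g]
    have hginj : Function.Injective g := by
      intro i j hij
      apply hf
      rw [← hg, ← hg, hij]
    let σ : Equiv.Perm (Fin r) := Equiv.ofBijective g (Finite.injective_iff_bijective.1 hginj)
    have : B.submatrix f id =
        (B.submatrix (fun i => s.orderEmbOfFin hs i) id).submatrix σ id := by
      ext i j
      simp [σ, hg]
    rw [this, Matrix.det_permute, abs_mul]
    rcases Int.units_eq_one_or (Equiv.Perm.sign σ) with h | h <;> rw [h] <;> simpa using hΔ s hs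
  · simp only [Function.Injective, not_forall] at hf
    obtain ⟨i, j, hij, hne⟩ := hf
    rw [Matrix.det_zero_of_row_eq hne (by ext k; simp [hij])]
    simpa using hΔ0

/-- Cramer. -/
theorem slp_cramer {n r : ℕ} (B : Matrix (Fin n) (Fin r) ℤ) (Δ : ℤ) (hΔ0 : 0 < Δ)
    (hΔ : ∀ f : Fin r → Fin n, |(B.submatrix f id).det| ≤ Δ) (f : Fin r → Fin n)
    (hf : |(B.submatrix f id).det| = Δ) (m : Fin r → ℤ) (i : Fin n) :
    |B.mulVec m i| ≤ ∑ j, |B.mulVec m (f j)| := by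
  set A := B.submatrix f id with hA
  have h1 : A.det * B.mulVec m i = ∑ j, (A.updateRow j (B i)).det * B.mulVec m (f j) := by
    have h2 : A.det • m = A.adjugate.mulVec (A.mulVec m) := by
      rw [Matrix.mulVec_mulVec, Matrix.adjugate_mul, Matrix.smul_mulVec, Matrix.one_mulVec]
    have h3 : A.mulVec m = fun j => B.mulVec m (f j) := rfl
    have h4 : A.det * B.mulVec m i = B i ⬝ᵥ (A.det • m) := by
      rw [dotProduct_smul]; rfl
    rw [h4, h2, h3, Matrix.dotProduct_mulVec]
    unfold dotProduct
    refine Finset.sum_congr rfl fun j _ => ?_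
    congr 1
    have := Matrix.cramer_transpose_apply A (B i) j
    rw [← this, Matrix.cramer_eq_adjugate_mulVec, ← Matrix.adjugate_transpose,
      Matrix.mulVec_transpose]
  have h5 : ∀ j, |(A.updateRow j (B i)).det| ≤ Δ := by
    intro j
    have : A.updateRow j (B i) = B.submatrix (Function.update f j i) id := by
      ext a b
      by_cases h : a = j
      · subst h; simp
      · simp [h, hA]
    rw [this]
    exact hΔ _
  have h6 : Δ * |B.mulVec m i| ≤ Δ * ∑ j, |B.mulVec m (f j)| := by
    rw [← hf, ← abs_mul, h1, hf, Finset.mul_sum]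
    refine (Finset.abs_sum_le_sum_abs _ _).trans (Finset.sum_le_sum fun j _ => ?_)
    rw [abs_mul]
    exact mul_le_mul_of_nonneg_right (h5 j) (abs_nonneg _)
  exact le_of_mul_le_mul_left h6 hΔ0

/-- Lower bound in full rank. -/
theorem slp_lower {r : ℕ} (L : AddSubgroup (Fin r → ℤ)) (k : ℕ) (hk : 0 < k)
    (hL : L.index ≠ 0) :
    (2 * k * L.index) ^ r ≤
      L.index * Nat.card {y : Fin r → ℤ // y ∈ L ∧ ∀ i, |y i| ≤ k * L.index} := by
  classical
  set D := L.index with hD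
  have hp : (0 : ℤ) < 2 * k * D := by positivity
  let Q := Fin r → Set.Ico (-(k * D : ℤ)) (-(k * D : ℤ) + 2 * k * D)
  have hfin : Finite {y : Fin r → ℤ // y ∈ L ∧ ∀ i, |y i| ≤ k * D} := by
    refine Set.Finite.subset (Set.finite_Icc (fun _ => -(k * D : ℤ)) (fun _ => (k * D : ℤ))) ?_
    rintro y ⟨_, hy⟩
    exact ⟨fun i => (abs_le.1 (hy i)).1, fun i => (abs_le.1 (hy i)).2⟩
  have hfin2 : Finite ((Fin r → ℤ) ⧸ L) := by
    have : L.FiniteIndex := ⟨hL⟩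
    infer_instance
  have hmul : ∀ w : Fin r → ℤ, ((2 * k * D : ℤ)) • w ∈ L := by
    intro w
    have := L.nsmul_index_mem w
    rw [mul_smul]
    refine L.zsmul_mem ?_ _
    rw [natCast_zsmul]; exact this
  let mk : (Fin r → ℤ) → (Fin r → ℤ) ⧸ L := fun x => QuotientAddGroup.mk x
  let red : (Fin r → ℤ) → (Fin r → ℤ) := fun x i => toIcoMod hp (-(k * D : ℤ)) (x i)
  have hred : ∀ x, red x = x - (2 * k * D : ℤ) • (fun i => toIcoDiv hp (-(k * D : ℤ)) (x i)) := by
    intro x; ext i; simp [red, toIcoMod, mul_comm]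
  let rep : (Fin r → ℤ) → (Fin r → ℤ) := fun x => (mk x).out
  have hrep : ∀ x, x - rep x ∈ L := by
    intro x
    have : mk (rep x) = mk x := Quotient.out_eq' _
    have := (QuotientAddGroup.eq (s := L)).1 this
    rwa [sub_eq_neg_add]
  let F : Q → ((Fin r → ℤ) ⧸ L) × {y : Fin r → ℤ // y ∈ L ∧ ∀ i, |y i| ≤ k * D} := fun x =>
    (mk (fun i => (x i : ℤ)), ⟨red ((fun i => (x i : ℤ)) - rep (fun i => (x i : ℤ))), by
      constructor
      · rw [hred]
        exact L.sub_mem (hrep _) (hmul _)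
      · intro i
        have := toIcoMod_mem_Ico hp (-(k * D : ℤ))
          (((fun i => (x i : ℤ)) - rep (fun i => (x i : ℤ))) i)
        rw [abs_le]
        exact ⟨this.1, by have := this.2; simp only [red]; linarith⟩⟩)
  have hF : Function.Injective F := by
    intro x y hxy
    have h1 : mk (fun i => (x i : ℤ)) = mk (fun i => (y i : ℤ)) := congrArg Prod.fst hxy
    have h2 : red ((fun i => (x i : ℤ)) - rep (fun i => (x i : ℤ))) =
      red ((fun i => (y i : ℤ)) - rep (fun i => (y i : ℤ))) :=
        congrArg (fun z => (z.2 : Fin r → ℤ)) hxy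
    have h3 : rep (fun i => (x i : ℤ)) = rep (fun i => (y i : ℤ)) := by
      simp only [rep, h1]
    rw [h3] at h2
    ext i
    have h4 := congrFun h2 i
    simp only [red, Pi.sub_apply] at h4
    rw [toIcoMod_inj] at h4
    have h5 : (x i : ℤ) ≡ y i [PMOD (2 * k * D : ℤ)] := by
      simpa using h4
    rw [← toIcoMod_inj hp (c := -(k * D : ℤ)), (toIcoMod_eq_self hp).2 (x i).2,
      (toIcoMod_eq_self hp).2 (y i).2] at h5
    exact h5
  have hcard := Nat.card_le_card_of_injective F hF
  rw [Nat.card_prod] at hcard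
  have hQ : Nat.card Q = (2 * k * D) ^ r := by
    simp only [Q, Nat.card_pi, Finset.prod_const, Finset.card_univ, Fintype.card_fin]
    congr 1
    rw [Nat.card_coe_set_eq, ← Finset.coe_Ico, Set.ncard_coe_finset, Int.card_Ico]
    have : (-(k * D : ℤ) + 2 * k * D - -(k * D : ℤ)) = ((2 * k * D : ℕ) : ℤ) := by
      push_cast; ring
    rw [this, Int.toNat_natCast]
  rw [hQ] at hcard
  exact hcard

theorem slp_count_ap (s : Finset ℤ) (c : ℤ) (d : ℕ) (hd : 0 < d) (R : ℝ) (hR : 0 ≤ R)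
    (hs : ∀ a ∈ s, (d : ℤ) ∣ a - c ∧ |(a : ℝ)| ≤ R) : (s.card : ℝ) ≤ 2 * R / d + 1 := by
  classical
  have hd' : (0 : ℝ) < d := by exact_mod_cast hd
  rcases s.eq_empty_or_nonempty with rfl | hne
  · simp; positivity
  let a₀ := s.min' hne
  have ha₀ := hs _ (s.min'_mem hne)
  have hsub : s ⊆ (Finset.Icc (0 : ℤ) ⌊2 * R / d⌋).image (fun q => a₀ + d * q) := by
    intro a ha
    obtain ⟨h1, h2⟩ := hs a ha
    have h3 : (d : ℤ) ∣ a - a₀ := by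
      have := dvd_sub h1 ha₀.1
      simpa using this
    obtain ⟨q, hq⟩ := h3
    have hle : a₀ ≤ a := s.min'_le a ha
    rw [Finset.mem_image]
    refine ⟨q, ?_, by rw [← hq]; ring⟩
    rw [Finset.mem_Icc]
    have hd'' : (0 : ℤ) < d := by exact_mod_cast hd
    constructor
    · by_contra hneg
      push Not at hneg
      nlinarith
    · rw [Int.le_floor, le_div_iff₀ hd']
      have h4 : (a : ℝ) - a₀ = d * q := by exact_mod_cast hq
      have h5 := (abs_le.1 h2).2
      have h6 := (abs_le.1 ha₀.2).1
      have h6' : -R ≤ (a₀ : ℝ) := h6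
      nlinarith
  have hc := (Finset.card_le_card hsub).trans Finset.card_image_le
  have h0 : 0 ≤ 2 * R / (d : ℝ) := by positivity
  have h1 : (0 : ℤ) ≤ ⌊2 * R / (d : ℝ)⌋ := Int.floor_nonneg.2 h0
  rw [Int.card_Icc] at hc
  have hc' : (s.card : ℤ) ≤ ⌊2 * R / (d : ℝ)⌋ + 1 := by omega
  have hc'' : (s.card : ℝ) ≤ (⌊2 * R / (d : ℝ)⌋ : ℝ) + 1 := by exact_mod_cast hc'
  linarith [Int.floor_le (2 * R / (d : ℝ))]

theorem slp_index_split {r : ℕ} (L : AddSubgroup (Fin (r + 1) → ℤ)) :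
    ∃ L' : AddSubgroup (Fin r → ℤ), ∃ d : ℕ, L'.index * d = L.index ∧
      (∀ x ∈ L, (d : ℤ) ∣ x 0) ∧
      (∀ x ∈ L, x 0 = 0 → Fin.tail x ∈ L') := by
  let ev : (Fin (r + 1) → ℤ) →+ ℤ := Pi.evalAddMonoidHom (fun _ => ℤ) 0
  let ι : (Fin r → ℤ) →+ (Fin (r + 1) → ℤ) :=
    { toFun := fun y => Fin.cons 0 y
      map_zero' := by ext i; refine Fin.cases ?_ ?_ i <;> simp
      map_add' := by intro x y; ext i; refine Fin.cases ?_ ?_ i <;> simp }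
  have hev : Function.Surjective ev := fun a => ⟨fun _ => a, rfl⟩
  have hker : ι.range = ev.ker := by
    ext x
    constructor
    · rintro ⟨y, rfl⟩
      simp [ι, ev, AddMonoidHom.mem_ker]
    · intro hx
      have hx0 : x 0 = 0 := hx
      refine ⟨Fin.tail x, ?_⟩
      change Fin.cons 0 (Fin.tail x) = x
      rw [← hx0, Fin.cons_self_tail]
  refine ⟨L.comap ι, (L.map ev).index, ?_, ?_, ?_⟩
  · rw [AddSubgroup.index_comap, AddSubgroup.index_map,
      AddMonoidHom.range_eq_top_of_surjective _ hev, AddSubgroup.index_top, mul_one, hker,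
      ← AddSubgroup.relIndex_sup_left]
    exact AddSubgroup.relIndex_mul_index le_sup_left
  · intro x hx
    obtain ⟨g, hg⟩ := Int.subgroup_cyclic (L.map ev)
    have hmem : x 0 ∈ L.map ev := ⟨x, hx, rfl⟩
    rw [← AddSubgroup.zmultiples_eq_closure] at hg
    rw [hg] at hmem ⊢
    rw [Int.index_zmultiples, Int.natAbs_dvd]
    exact Int.mem_zmultiples_iff.1 hmem
  · intro x hx hx0
    change Fin.cons 0 (Fin.tail x) ∈ L
    rw [← hx0, Fin.cons_self_tail]
    exact hx

theorem slp_upper (R : ℝ) (hR : 0 ≤ R) : ∀ (r : ℕ) (L : AddSubgroup (Fin r → ℤ)),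
    L.index ≠ 0 → ∀ (s : Finset (Fin r → ℤ)) (v : Fin r → ℤ),
    (∀ x ∈ s, x - v ∈ L ∧ ∀ i, |(x i : ℝ)| ≤ R) →
    (s.card : ℝ) * (2 * R + 1) ≤ (2 * R / L.index + 1) * (2 * R + 1) ^ r := by
  classical
  intro r
  induction r with
  | zero =>
    intro L hL s v hs
    have h1 : L.index = 1 := by
      rw [AddSubgroup.index_eq_one]
      exact Subsingleton.elim _ _
    have h2 : s.card ≤ 1 := Finset.card_le_one_of_subsingleton s
    have h2' : (s.card : ℝ) ≤ 1 := by exact_mod_cast h2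
    rw [h1]
    simp
    nlinarith
  | succ r ih =>
    intro L hL s v hs
    obtain ⟨L', d, hidx, hdvd, htail⟩ := slp_index_split L
    have hL' : L'.index ≠ 0 := by
      rintro h; rw [h] at hidx; simp at hidx; exact hL hidx.symm
    have hd : d ≠ 0 := by
      rintro h; rw [h] at hidx; simp at hidx; exact hL hidx.symm
    have hpos : 0 < 2 * R + 1 := by linarith
    set M : ℝ := (2 * R / L'.index + 1) * (2 * R + 1) ^ r / (2 * R + 1) with hM
    have hM0 : 0 ≤ M := by positivity
    have hfib : ∀ a ∈ s.image (fun x => x 0), (s.filter (fun x => x 0 = a)).card ≤ ⌊M⌋₊ := by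
      intro a ha
      obtain ⟨x₀, hx₀, rfl⟩ := Finset.mem_image.1 ha
      apply Nat.le_floor
      have hinj : Set.InjOn Fin.tail (s.filter (fun x => x 0 = x₀ 0) : Set (Fin (r + 1) → ℤ)) := by
        intro x hx y hy hxy
        simp only [Finset.coe_filter, Set.mem_ofPred_eq] at hx hy
        rw [← Fin.cons_self_tail x, ← Fin.cons_self_tail y, hxy, hx.2, hy.2]
      rw [← Finset.card_image_of_injOn hinj, hM, le_div_iff₀ hpos]
      refine ih L' hL' _ (Fin.tail x₀) ?_
      intro y hy
      obtain ⟨x, hx, rfl⟩ := Finset.mem_image.1 hy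
      obtain ⟨hxs, hx0⟩ := Finset.mem_filter.1 hx
      constructor
      · have : x - x₀ ∈ L := by
          have := L.sub_mem (hs x hxs).1 (hs x₀ hx₀).1
          simpa using this
        exact htail _ this (by simp [hx0])
      · intro i
        exact (hs x hxs).2 i.succ
    have h1 := Finset.card_le_mul_card_image s _ hfib
    have h2 : ((s.image (fun x => x 0)).card : ℝ) ≤ 2 * R / d + 1 := by
      refine slp_count_ap _ (v 0) d (Nat.pos_of_ne_zero hd) R hR ?_
      intro a ha
      obtain ⟨x, hx, rfl⟩ := Finset.mem_image.1 ha
      exact ⟨hdvd _ (hs x hx).1, (hs x hx).2 0⟩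
    have h3 : (s.card : ℝ) ≤ M * (2 * R / d + 1) := by
      calc (s.card : ℝ) ≤ (⌊M⌋₊ : ℝ) * ((s.image (fun x => x 0)).card : ℝ) := by exact_mod_cast h1
        _ ≤ M * (2 * R / d + 1) := by
          gcongr
          exact Nat.floor_le hM0
    have hd1 : (1 : ℝ) ≤ d := by exact_mod_cast Nat.pos_of_ne_zero hd
    have hl1 : (1 : ℝ) ≤ L'.index := by exact_mod_cast Nat.pos_of_ne_zero hL'
    have hkey : (2 * R / L'.index + 1) * (2 * R / d + 1) ≤
        (2 * R / L.index + 1) * (2 * R + 1) := by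
      rw [← hidx]
      push_cast
      have e1 : (L'.index : ℝ)⁻¹ ≤ 1 := inv_le_one_of_one_le₀ hl1
      have e2 : (d : ℝ)⁻¹ ≤ 1 := inv_le_one_of_one_le₀ hd1
      simp only [div_eq_mul_inv, mul_inv]
      have e3 : 0 ≤ 2 * R * ((1 - (L'.index : ℝ)⁻¹) * (1 - (d : ℝ)⁻¹)) :=
        mul_nonneg (by linarith) (mul_nonneg (by linarith) (by linarith))
      nlinarith
    calc (s.card : ℝ) * (2 * R + 1) ≤ M * (2 * R / d + 1) * (2 * R + 1) := by gcongr
      _ = ((2 * R / L'.index + 1) * (2 * R / d + 1)) * (2 * R + 1) ^ r := by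
        rw [hM]; field_simp
      _ ≤ ((2 * R / L.index + 1) * (2 * R + 1)) * (2 * R + 1) ^ r := by gcongr
      _ = _ := by ring

theorem slp_main {n r : ℕ} (hr : 1 ≤ r)
    (B : Matrix (Fin n) (Fin r) ℤ)
    (hB : LinearIndependent ℤ (fun j => (fun i => B i j)))
    (Δ : ℤ)
    (hΔ : IsGreatest {d : ℤ | ∃ (s : Finset (Fin n)) (hs : s.card = r),
      d = |(B.submatrix (fun i => s.orderEmbOfFin hs i) id).det|} Δ) :
    (∀ k : ℕ, 0 < k → ∀ R : ℝ, R = ((k * r : ℕ) : ℝ) * (Δ : ℝ) →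
      (2 * R) ^ r / ((r : ℝ) ^ r * (Δ : ℝ)) ≤
        (Nat.card {x : Fin n → ℤ //
          (∃ m : Fin r → ℤ, B.mulVec m = x) ∧ ∀ i, |((x i : ℤ) : ℝ)| ≤ R} : ℝ) ∧
      (Nat.card {x : Fin n → ℤ //
          (∃ m : Fin r → ℤ, B.mulVec m = x) ∧ ∀ i, |((x i : ℤ) : ℝ)| ≤ R} : ℝ) ≤
        (2 * R / (Δ : ℝ) + 1) * (2 * R + 1) ^ (r - 1)) ∧
    (∀ R : ℝ, 1 ≤ R →
      (Nat.card {x : Fin n → ℤ //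
          (∃ m : Fin r → ℤ, B.mulVec m = x) ∧ ∀ i, |((x i : ℤ) : ℝ)| ≤ R} : ℝ) ≤
        (2 * R / (Δ : ℝ) + 1) * (2 * R + 1) ^ (r - 1)) := by
  classical
  obtain ⟨⟨s, hs, hsΔ⟩, hmax⟩ := hΔ
  have hΔnn : 0 ≤ Δ := by rw [hsΔ]; exact abs_nonneg _
  have hminor := slp_minor_le B Δ hΔnn (fun s hs => hmax ⟨s, hs, rfl⟩)
  have hΔpos : 0 < Δ := by
    obtain ⟨f, hf⟩ := slp_exists_minor B hB
    exact lt_of_lt_of_le (abs_pos.2 hf) (hminor f)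
  set f : Fin r → Fin n := fun i => s.orderEmbOfFin hs i with hfdef
  set A := B.submatrix f id with hA
  have hdet : A.det ≠ 0 := by
    intro h; rw [h] at hsΔ; simp at hsΔ; omega
  let L := A.mulVecLin.toAddMonoidHom.range
  have hidx : L.index = A.det.natAbs := slp_index_range A hdet
  have hidxΔ : (L.index : ℤ) = Δ := by rw [hidx, hsΔ, Int.natCast_natAbs]
  have hidxR : (L.index : ℝ) = (Δ : ℝ) := by exact_mod_cast congrArg (Int.cast (R := ℝ)) hidxΔ
  have hL0 : L.index ≠ 0 := by rw [hidx]; simpa using hdet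
  have hΔR : (0 : ℝ) < Δ := by exact_mod_cast hΔpos
  have hAB : ∀ m, A.mulVec m = fun j => B.mulVec m (f j) := fun m => rfl
  have hAinj : ∀ m m', A.mulVec m = A.mulVec m' → m = m' := by
    intro m m' h
    rw [← sub_eq_zero, ← Matrix.mulVec_sub] at h
    exact sub_eq_zero.1 (Matrix.eq_zero_of_mulVec_eq_zero hdet h)
  have hfin : ∀ R : ℝ, Finite {x : Fin n → ℤ //
      (∃ m : Fin r → ℤ, B.mulVec m = x) ∧ ∀ i, |((x i : ℤ) : ℝ)| ≤ R} := by
    intro R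
    refine Set.Finite.subset (Set.finite_Icc (fun _ => -⌊R⌋) (fun _ => ⌊R⌋)) ?_
    rintro y ⟨_, hy⟩
    have : ∀ i, |y i| ≤ ⌊R⌋ := fun i => by
      rw [Int.le_floor]; push_cast; exact hy i
    exact ⟨fun i => (abs_le.1 (this i)).1, fun i => (abs_le.1 (this i)).2⟩
  have hup : ∀ R : ℝ, 1 ≤ R →
      (Nat.card {x : Fin n → ℤ //
          (∃ m : Fin r → ℤ, B.mulVec m = x) ∧ ∀ i, |((x i : ℤ) : ℝ)| ≤ R} : ℝ) ≤
        (2 * R / (Δ : ℝ) + 1) * (2 * R + 1) ^ (r - 1) := by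
    intro R hR
    have := hfin R
    have : Fintype {x : Fin n → ℤ //
      (∃ m : Fin r → ℤ, B.mulVec m = x) ∧ ∀ i, |((x i : ℤ) : ℝ)| ≤ R} := Fintype.ofFinite _
    let G : {x : Fin n → ℤ //
      (∃ m : Fin r → ℤ, B.mulVec m = x) ∧ ∀ i, |((x i : ℤ) : ℝ)| ≤ R} → (Fin r → ℤ) :=
        fun x j => x.1 (f j)
    have hG : Function.Injective G := by
      rintro ⟨x, ⟨m, rfl⟩, hx⟩ ⟨y, ⟨m', rfl⟩, hy⟩ h
      have : m = m' := hAinj m m' h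
      subst this
      rfl
    have h1 := slp_upper R (by linarith) r L hL0 (Finset.univ.image G) 0 (by
      intro y hy
      obtain ⟨⟨x, ⟨m, rfl⟩, hx⟩, _, rfl⟩ := Finset.mem_image.1 hy
      refine ⟨?_, fun i => hx (f i)⟩
      rw [sub_zero]
      exact ⟨m, rfl⟩)
    rw [Finset.card_image_of_injective _ hG, Finset.card_univ, ← Nat.card_eq_fintype_card,
      hidxR] at h1
    have hpos : 0 < 2 * R + 1 := by linarith
    have h2 : (2 * R + 1) ^ r = (2 * R + 1) ^ (r - 1) * (2 * R + 1) := by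
      rw [← pow_succ, Nat.sub_add_cancel hr]
    rw [h2, ← mul_assoc] at h1
    exact le_of_mul_le_mul_right h1 hpos
  refine ⟨fun k hk R hR => ⟨?_, hup R ?_⟩, hup⟩
  · have h1 := slp_lower L k hk hL0
    have := hfin R
    have hle : Nat.card {y : Fin r → ℤ // y ∈ L ∧ ∀ i, |y i| ≤ k * L.index} ≤
        Nat.card {x : Fin n → ℤ //
          (∃ m : Fin r → ℤ, B.mulVec m = x) ∧ ∀ i, |((x i : ℤ) : ℝ)| ≤ R} := by
      have hch : ∀ y : {y : Fin r → ℤ // y ∈ L ∧ ∀ i, |y i| ≤ k * L.index},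
          ∃ m : Fin r → ℤ, A.mulVec m = y.1 := fun y => y.2.1
      choose m hm using hch
      refine Nat.card_le_card_of_injective (fun y => ⟨B.mulVec (m y), ⟨m y, rfl⟩, ?_⟩) ?_
      · intro i
        have h2 := slp_cramer B Δ hΔpos hminor f hsΔ.symm (m y) i
        have h3 : ∑ j, |B.mulVec (m y) (f j)| ≤ ∑ j : Fin r, (k * Δ : ℤ) := by
          refine Finset.sum_le_sum fun j _ => ?_
          have h4 := y.2.2 j
          rw [← hm y, hidxΔ] at h4
          exact h4
        have h5 := h2.trans h3
        simp only [Finset.sum_const, Finset.card_univ, Fintype.card_fin, nsmul_eq_mul] at h5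
        have h6 : ((|B.mulVec (m y) i| : ℤ) : ℝ) ≤ ((r * (k * Δ) : ℤ) : ℝ) := by
          exact_mod_cast h5
        rw [hR]
        push_cast at h6 ⊢
        linarith
      · intro y y' h
        have h2 : B.mulVec (m y) = B.mulVec (m y') := congrArg Subtype.val h
        apply Subtype.ext
        rw [← hm y, ← hm y', hAB, hAB, h2]
    have h2 : ((2 * k * L.index : ℕ) ^ r : ℝ) ≤ Δ * (Nat.card {x : Fin n → ℤ //
          (∃ m : Fin r → ℤ, B.mulVec m = x) ∧ ∀ i, |((x i : ℤ) : ℝ)| ≤ R} : ℝ) := by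
      rw [← hidxR]
      exact_mod_cast h1.trans (Nat.mul_le_mul_left _ hle)
    have hr0 : (0 : ℝ) < r := by exact_mod_cast hr
    rw [div_le_iff₀ (by positivity)]
    have h3 : (2 * R) ^ r = (r : ℝ) ^ r * ((2 * k * L.index : ℕ) : ℝ) ^ r := by
      rw [← mul_pow, hR]
      push_cast
      rw [hidxR]
      ring
    rw [h3]
    calc _ ≤ (r : ℝ) ^ r * (Δ * (Nat.card {x : Fin n → ℤ //
          (∃ m : Fin r → ℤ, B.mulVec m = x) ∧ ∀ i, |((x i : ℤ) : ℝ)| ≤ R} : ℝ)) := by gcongr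
      _ = _ := by ring
  · rw [hR]
    have h1 : (1 : ℝ) ≤ ((k * r : ℕ) : ℝ) := by exact_mod_cast Nat.mul_pos hk hr
    have h2 : (1 : ℝ) ≤ Δ := by exact_mod_cast hΔpos
    nlinarith


/-- **Counting points of a sublattice of `ℤ^n` in a cube** (Lemma 6.1 of the paper;
Theorems 4.2 and 4.3 of [Fukshansky, "classical"]). Let `Λ ⊆ ℤ^n` be the lattice of rank
`n - l` spanned by the linearly independent columns of an integer matrix `B`, and let `Δ` be
the maximum of the absolute values of the `(n-l) × (n-l)` minors (Grassmann coordinates) of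
`B`. Then for every `R` which is a positive integer multiple of `(n-l)Δ`,
`(2R)^{n-l}/((n-l)^{n-l}Δ) ≤ |Λ ∩ C_R^n| ≤ (2R/Δ + 1)(2R + 1)^{n-l-1}`, and the upper bound
holds for every real `R ≥ 1`. -/
theorem sublattice_points_in_cube {n l : ℕ} (hl : 1 ≤ l) (hln : l ≤ n - 1)
    (B : Matrix (Fin n) (Fin (n - l)) ℤ)
    (hB : LinearIndependent ℤ (fun j => (fun i => B i j)))
    (Δ : ℤ)
    (hΔ : IsGreatest {d : ℤ | ∃ (s : Finset (Fin n)) (hs : s.card = n - l),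
      d = |(B.submatrix (fun i => s.orderEmbOfFin hs i) id).det|} Δ) :
    (∀ k : ℕ, 0 < k → ∀ R : ℝ, R = ((k * (n - l) : ℕ) : ℝ) * (Δ : ℝ) →
      (2 * R) ^ (n - l) / (((n - l : ℕ) : ℝ) ^ (n - l) * (Δ : ℝ)) ≤
        (Nat.card {x : Fin n → ℤ //
          (∃ m : Fin (n - l) → ℤ, B.mulVec m = x) ∧ ∀ i, |((x i : ℤ) : ℝ)| ≤ R} : ℝ) ∧
      (Nat.card {x : Fin n → ℤ //
          (∃ m : Fin (n - l) → ℤ, B.mulVec m = x) ∧ ∀ i, |((x i : ℤ) : ℝ)| ≤ R} : ℝ) ≤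
        (2 * R / (Δ : ℝ) + 1) * (2 * R + 1) ^ (n - l - 1)) ∧
    (∀ R : ℝ, 1 ≤ R →
      (Nat.card {x : Fin n → ℤ //
          (∃ m : Fin (n - l) → ℤ, B.mulVec m = x) ∧ ∀ i, |((x i : ℤ) : ℝ)| ≤ R} : ℝ) ≤
        (2 * R / (Δ : ℝ) + 1) * (2 * R + 1) ^ (n - l - 1)) := by
  exact slp_main (by omega) B hB Δ hΔ
end
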